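/- arXiv:2102.05743 — 4 statements merged into one kernel-verified Lean document; each statement's English description precedes it below -/
import Mathlib

section
/- If the partition function Z = ∑_{(x_1, …, x_T) ∈ X^T} ψ₁(x_1) · ∏_{t=2}^{T} ψ_t(x_{t-1}, x_t) is nonzero, then for every k with 1 ≤ k ≤ T the marginal of the normalized joint distribution p(x_{1:T}) = (1/Z) ψ₁(x_1) ∏_{t=2}^T ψ_t(x_{t-1}, x_t) at time k satisfies p(x_k = a) = ψ^f_k(a) · ψ^b_k(a) / Z_k, where Z_k = ∑_{a ∈ X} ψ^f_k(a) · ψ^b_k(a). -/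
/-!
A path through state `a` at time `k` is the same thing as a choice of its past
`(x_1, …, x_{k-1})` together with a choice of its future `(x_{k+1}, …, x_T)`, and its weight
splits as a factor depending only on the past (and `a`) times a factor depending only on the
future (and `a`). Summing over both choices, the unnormalized marginal at `a` is
`ψ^f_k(a) ψ^b_k(a)` (`sum_jointW_filter`). Summing this identity over `a` partitions the paths
by their state at time `k`, so `Z = Z_k`, and dividing gives the theorem.
-/

open scoped NNReal BigOperators

variable {X : Type*}

/-- Read the `t`-th entry (0-based) of a finite tuple, with an arbitrary default. -/
noncomputable def get [Nonempty X] {n : ℕ} (p : Fin n → X) (t : ℕ) : X :=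
  if h : t < n then p ⟨t, h⟩ else Classical.arbitrary X

/-- The state sequence `x_1, …, x_k` determined by the tuple
`p = (x_1, …, x_{k-1}) ∈ X^{k-1}` and the terminal state `x_k = a`:
`fwdState k a p t = x_t` for `1 ≤ t ≤ k`. -/
noncomputable def fwdState [Nonempty X] (k : ℕ) (a : X) (p : Fin (k - 1) → X)
    (t : ℕ) : X :=
  if t = k then a else get p (t - 1)

/-- Forward potential
`ψ^f_k(a) = ∑_{(x_1,…,x_{k-1}) ∈ X^{k-1}} ψ₁(x_1) ∏_{t=2}^k ψ_t(x_{t-1}, x_t)`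
with `x_k = a`. -/
noncomputable def fwdPot [Fintype X] [Nonempty X] (ψ₁ : X → ℝ≥0)
    (ψ : ℕ → X → X → ℝ≥0) (k : ℕ) (a : X) : ℝ≥0 :=
  ∑ p : Fin (k - 1) → X,
    ψ₁ (fwdState k a p 1) *
      ∏ t ∈ Finset.Icc 2 k, ψ t (fwdState k a p (t - 1)) (fwdState k a p t)

/-- The state sequence `x_k, x_{k+1}, …` determined by the initial state `x_k = a`
and the tuple `p = (x_{k+1}, …) `: `bwdState k a p t = x_t` for `k ≤ t`. -/
noncomputable def bwdState [Nonempty X] {m : ℕ} (k : ℕ) (a : X) (p : Fin m → X)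
    (t : ℕ) : X :=
  if t = k then a else get p (t - k - 1)

/-- Backward potential
`ψ^b_k(a) = ∑_{(x_{k+1},…,x_T) ∈ X^{T-k}} ∏_{t=k+1}^T ψ_t(x_{t-1}, x_t)`
with `x_k = a`. -/
noncomputable def bwdPot [Fintype X] [Nonempty X] (ψ : ℕ → X → X → ℝ≥0)
    (k T : ℕ) (a : X) : ℝ≥0 :=
  ∑ p : Fin (T - k) → X,
    ∏ t ∈ Finset.Icc (k + 1) T, ψ t (bwdState k a p (t - 1)) (bwdState k a p t)

/-- The joint potential product
`ψ₁(x_1) ∏_{t=2}^T ψ_t(x_{t-1}, x_t)` of a full path `q = (x_1, …, x_T) ∈ X^T`. -/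
noncomputable def jointW [Nonempty X] (ψ₁ : X → ℝ≥0) (ψ : ℕ → X → X → ℝ≥0)
    (T : ℕ) (q : Fin T → X) : ℝ≥0 :=
  ψ₁ (get q 0) * ∏ t ∈ Finset.Icc 2 T, ψ t (get q (t - 2)) (get q (t - 1))

/-- The path `(x_1, …, x_T)` with past `p`, state `a` at time `k`, and future `r`. Coordinates
are 0-based, so `a` sits at index `k - 1` and the future starts at index `k`. -/
noncomputable def gluePath [Nonempty X] (k T : ℕ) (a : X)
    (p : Fin (k - 1) → X) (r : Fin (T - k) → X) : Fin T → X :=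
  fun t => if (t : ℕ) < k - 1 then get p t else if (t : ℕ) = k - 1 then a else get r (t - k)

theorem get_of_lt [Nonempty X] {n : ℕ} (p : Fin n → X) {t : ℕ} (h : t < n) :
    get p t = p ⟨t, h⟩ := by
  simp [_root_.get, h]

theorem get_gluePath_eq_fwdState [Nonempty X] {k T : ℕ} (hk1 : 1 ≤ k) (hkT : k ≤ T) (a : X)
    (p : Fin (k - 1) → X) (r : Fin (T - k) → X) {t : ℕ} (h1 : 1 ≤ t) (ht : t ≤ k) :
    get (gluePath k T a p r) (t - 1) = fwdState k a p t := by
  rw [get_of_lt _ (by omega)]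
  unfold gluePath fwdState
  dsimp only
  split_ifs <;> first | rfl | omega

theorem get_gluePath_eq_bwdState [Nonempty X] {k T : ℕ} (hk1 : 1 ≤ k) (a : X)
    (p : Fin (k - 1) → X) (r : Fin (T - k) → X) {t : ℕ} (h1 : k ≤ t) (ht : t ≤ T) :
    get (gluePath k T a p r) (t - 1) = bwdState k a r t := by
  rw [get_of_lt _ (by omega)]
  unfold gluePath bwdState
  dsimp only
  split_ifs <;> first | rfl | omega | (congr 1; omega)

/-- The weight of a path factors through its state at time `k`: the transitions `2, …, k` see
only the past and `a`, the transitions `k + 1, …, T` only the future and `a`. -/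
theorem jointW_gluePath [Nonempty X] (ψ₁ : X → ℝ≥0) (ψ : ℕ → X → X → ℝ≥0) {k T : ℕ}
    (hk1 : 1 ≤ k) (hkT : k ≤ T) (a : X) (p : Fin (k - 1) → X) (r : Fin (T - k) → X) :
    jointW ψ₁ ψ T (gluePath k T a p r) =
      (ψ₁ (fwdState k a p 1) *
        ∏ t ∈ Finset.Icc 2 k, ψ t (fwdState k a p (t - 1)) (fwdState k a p t)) *
      ∏ t ∈ Finset.Icc (k + 1) T, ψ t (bwdState k a r (t - 1)) (bwdState k a r t) := by
  have hsplit : Finset.Icc 2 T = Finset.Icc 2 k ∪ Finset.Icc (k + 1) T := by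
    ext t
    simp only [Finset.mem_union, Finset.mem_Icc]
    omega
  have hdisj : Disjoint (Finset.Icc 2 k) (Finset.Icc (k + 1) T) := by
    rw [Finset.disjoint_left]
    intro t
    simp only [Finset.mem_Icc]
    omega
  unfold jointW
  rw [hsplit, Finset.prod_union hdisj, ← mul_assoc]
  congr 1
  · congr 1
    · rw [← get_gluePath_eq_fwdState hk1 hkT a p r le_rfl hk1]
    · refine Finset.prod_congr rfl fun t ht => ?_
      rw [Finset.mem_Icc] at ht
      rw [← get_gluePath_eq_fwdState hk1 hkT a p r (by omega : 1 ≤ t - 1) (by omega),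
        ← get_gluePath_eq_fwdState hk1 hkT a p r (by omega : 1 ≤ t) ht.2, Nat.sub_sub]
  · refine Finset.prod_congr rfl fun t ht => ?_
    rw [Finset.mem_Icc] at ht
    rw [← get_gluePath_eq_bwdState hk1 a p r (by omega : k ≤ t - 1) (by omega),
      ← get_gluePath_eq_bwdState hk1 a p r (by omega : k ≤ t) ht.2, Nat.sub_sub]

/-- The unnormalized marginal at time `k` is the product of forward and backward potentials. -/
theorem sum_jointW_filter [Fintype X] [Nonempty X] [DecidableEq X] (ψ₁ : X → ℝ≥0)
    (ψ : ℕ → X → X → ℝ≥0) {k T : ℕ} (hk1 : 1 ≤ k) (hkT : k ≤ T) (a : X) :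
    ∑ q ∈ Finset.univ.filter (fun q : Fin T → X => get q (k - 1) = a), jointW ψ₁ ψ T q
      = fwdPot ψ₁ ψ k a * bwdPot ψ k T a := by
  unfold fwdPot bwdPot
  rw [Finset.sum_mul_sum, ← Finset.sum_product']
  symm
  refine Finset.sum_bij' (fun pr _ => gluePath k T a pr.1 pr.2)
    (fun q _ => (fun t => get q t, fun t => get q (k + t))) ?_ ?_ ?_ ?_ ?_
  · rintro ⟨p, r⟩ -
    rw [Finset.mem_filter]
    refine ⟨Finset.mem_univ _, ?_⟩
    rw [get_gluePath_eq_fwdState hk1 hkT a p r hk1 le_rfl]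
    simp [fwdState]
  · simp
  · rintro ⟨p, r⟩ -
    refine Prod.ext (funext fun t => ?_) (funext fun t => ?_)
    · have ht := t.isLt
      dsimp only
      rw [get_of_lt _ (by omega)]
      simp [gluePath, ht, _root_.get]
    · have ht := t.isLt
      dsimp only
      rw [get_of_lt _ (by omega)]
      have h1 : ¬ (k + (t : ℕ) < k - 1) := by omega
      have h2 : ¬ (k + (t : ℕ) = k - 1) := by omega
      simp [gluePath, h1, h2, _root_.get]
  · intro q hq
    have hqa : get q (k - 1) = a := (Finset.mem_filter.mp hq).2
    funext t
    have ht := t.isLt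
    unfold gluePath
    dsimp only
    split_ifs with h1 h2
    · rw [get_of_lt _ h1, get_of_lt _ ht]
    · rw [← hqa, ← h2, get_of_lt _ ht]
    · rw [get_of_lt _ (by omega)]
      dsimp only
      rw [Nat.add_sub_cancel' (by omega), get_of_lt _ ht]
  · rintro ⟨p, r⟩ -
    exact (jointW_gluePath ψ₁ ψ hk1 hkT a p r).symm

/-- If the partition function `Z` is nonzero, then the time-`k` marginal of the
normalized joint distribution `p(x_{1:T}) = ψ₁(x_1) ∏_{t=2}^T ψ_t(x_{t-1}, x_t) / Z`
satisfies `p(x_k = a) = ψ^f_k(a) ψ^b_k(a) / Z_k`, where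
`Z_k = ∑_a ψ^f_k(a) ψ^b_k(a)`. -/
theorem marginal_eq_fwdPot_mul_bwdPot_div
    [Fintype X] [Nonempty X] [DecidableEq X] (T : ℕ) (hT : 1 ≤ T)
    (ψ₁ : X → ℝ≥0) (ψ : ℕ → X → X → ℝ≥0)
    (hZ : (∑ q : Fin T → X, jointW ψ₁ ψ T q) ≠ 0)
    (k : ℕ) (hk1 : 1 ≤ k) (hkT : k ≤ T) (a : X) :
    ∑ q ∈ Finset.univ.filter (fun q : Fin T → X => get q (k - 1) = a),
        jointW ψ₁ ψ T q / (∑ q' : Fin T → X, jointW ψ₁ ψ T q')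
      = fwdPot ψ₁ ψ k a * bwdPot ψ k T a
          / (∑ b : X, fwdPot ψ₁ ψ k b * bwdPot ψ k T b) := by
  have hZk : ∑ b : X, fwdPot ψ₁ ψ k b * bwdPot ψ k T b = ∑ q : Fin T → X, jointW ψ₁ ψ T q := by
    simp_rw [← sum_jointW_filter ψ₁ ψ hk1 hkT]
    exact Finset.sum_fiberwise _ _ _
  rw [← Finset.sum_div, sum_jointW_filter ψ₁ ψ hk1 hkT, hZk]
end

section
/- Suppose x* ∈ X^T is the unique maximizer of the joint potential product x ↦ ψ₁(x_1) · ∏_{t=2}^{T} ψ_t(x_{t-1}, x_t) over X^T. Then for every k with 1 ≤ k ≤ T, the k-th coordinate x*_k is the unique maximizer over a ∈ X of the product ψ̃^f_k(a) · ψ̃^b_k(a) of the maximum forward and maximum backward potentials; i.e., the MAP estimate at each time step is determined by maximizing ψ̃^f_k · ψ̃^b_k. -/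
/-! Splitting the product at time `k` factors the joint potential of a path with `x_k = a` as
(forward product of `x_1, …, x_{k-1}, a`) * (backward product of `a, x_{k+1}, …, x_T`)
(`jointW_eq_mul`). A forward tuple and a backward tuple through the same `a` glue to a full path,
so `maxFwd * maxBwd` at `a` is attained as the joint potential of some path with `x_k = a`
(`exists_jointW_eq`); conversely, it dominates the joint potential of every path with `x_k = a`
(`jointW_le`). If `a` differs from the `k`-th coordinate of `qstar`, the attaining path differs
from `qstar`, hence has strictly smaller joint potential. -/

open scoped NNReal BigOperators

variable {X : Type*}

/-- Maximum forward potential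
`ψ̃^f_k(a) = max_{(x_1,…,x_{k-1}) ∈ X^{k-1}} ψ₁(x_1) ∏_{t=2}^k ψ_t(x_{t-1}, x_t)`
with `x_k = a`. -/
noncomputable def maxFwd [Fintype X] [Nonempty X] (ψ₁ : X → ℝ≥0)
    (ψ : ℕ → X → X → ℝ≥0) (k : ℕ) (a : X) : ℝ≥0 :=
  Finset.univ.sup' Finset.univ_nonempty fun p : Fin (k - 1) → X =>
    ψ₁ (fwdState k a p 1) *
      ∏ t ∈ Finset.Icc 2 k, ψ t (fwdState k a p (t - 1)) (fwdState k a p t)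

/-- Maximum backward potential
`ψ̃^b_k(a) = max_{(x_{k+1},…,x_T) ∈ X^{T-k}} ∏_{t=k+1}^T ψ_t(x_{t-1}, x_t)`
with `x_k = a`. -/
noncomputable def maxBwd [Fintype X] [Nonempty X] (ψ : ℕ → X → X → ℝ≥0)
    (k T : ℕ) (a : X) : ℝ≥0 :=
  Finset.univ.sup' Finset.univ_nonempty fun p : Fin (T - k) → X =>
    ∏ t ∈ Finset.Icc (k + 1) T, ψ t (bwdState k a p (t - 1)) (bwdState k a p t)

/-- If the path `q` agrees with the forward sequence of `p` on `1, …, k` and with the backward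
sequence of `r` on `k, …, T`, then its joint potential is the product of the two partial ones. -/
theorem jointW_eq_mul [Nonempty X] {T k : ℕ} (hk1 : 1 ≤ k) (hkT : k ≤ T)
    (ψ₁ : X → ℝ≥0) (ψ : ℕ → X → X → ℝ≥0) (q : Fin T → X) (a : X)
    (p : Fin (k - 1) → X) (r : Fin (T - k) → X)
    (hf : ∀ t, 1 ≤ t → t ≤ k → fwdState k a p t = get q (t - 1))
    (hb : ∀ t, k ≤ t → t ≤ T → bwdState k a r t = get q (t - 1)) :
    jointW ψ₁ ψ T q =
      (ψ₁ (fwdState k a p 1) *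
        ∏ t ∈ Finset.Icc 2 k, ψ t (fwdState k a p (t - 1)) (fwdState k a p t)) *
      ∏ t ∈ Finset.Icc (k + 1) T, ψ t (bwdState k a r (t - 1)) (bwdState k a r t) := by
  have hF : ∏ t ∈ Finset.Icc 2 k, ψ t (fwdState k a p (t - 1)) (fwdState k a p t) =
      ∏ t ∈ Finset.Icc 2 k, ψ t (get q (t - 2)) (get q (t - 1)) := by
    refine Finset.prod_congr rfl fun t ht => ?_
    rw [Finset.mem_Icc] at ht
    rw [hf t (by omega) (by omega), hf (t - 1) (by omega) (by omega), Nat.sub_sub]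
  have hB : ∏ t ∈ Finset.Icc (k + 1) T, ψ t (bwdState k a r (t - 1)) (bwdState k a r t) =
      ∏ t ∈ Finset.Icc (k + 1) T, ψ t (get q (t - 2)) (get q (t - 1)) := by
    refine Finset.prod_congr rfl fun t ht => ?_
    rw [Finset.mem_Icc] at ht
    rw [hb t (by omega) (by omega), hb (t - 1) (by omega) (by omega), Nat.sub_sub]
  have hdisj : Disjoint (Finset.Icc 2 k) (Finset.Icc (k + 1) T) := by
    rw [Finset.disjoint_left]
    intro t h1 h2
    rw [Finset.mem_Icc] at h1 h2
    omega
  have hunion : Finset.Icc 2 T = Finset.Icc 2 k ∪ Finset.Icc (k + 1) T := by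
    ext t
    simp only [Finset.mem_union, Finset.mem_Icc]
    omega
  rw [hF, hB, hf 1 le_rfl hk1, jointW, hunion, Finset.prod_union hdisj, mul_assoc]

/-- The joint potential of a path is at most `maxFwd * maxBwd` at its `k`-th coordinate. -/
theorem jointW_le [Fintype X] [Nonempty X] {T k : ℕ} (hk1 : 1 ≤ k) (hkT : k ≤ T)
    (ψ₁ : X → ℝ≥0) (ψ : ℕ → X → X → ℝ≥0) (q : Fin T → X) :
    jointW ψ₁ ψ T q ≤
      maxFwd ψ₁ ψ k (get q (k - 1)) * maxBwd ψ k T (get q (k - 1)) := by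
  rw [jointW_eq_mul hk1 hkT ψ₁ ψ q (get q (k - 1)) (fun i => get q i) (fun i => get q (k + i))]
  · unfold maxFwd maxBwd
    gcongr
    · exact Finset.le_sup' (fun p : Fin (k - 1) → X =>
        ψ₁ (fwdState k (get q (k - 1)) p 1) * ∏ t ∈ Finset.Icc 2 k,
          ψ t (fwdState k (get q (k - 1)) p (t - 1)) (fwdState k (get q (k - 1)) p t))
        (Finset.mem_univ _)
    · exact Finset.le_sup' (fun r : Fin (T - k) → X => ∏ t ∈ Finset.Icc (k + 1) T,
          ψ t (bwdState k (get q (k - 1)) r (t - 1)) (bwdState k (get q (k - 1)) r t))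
        (Finset.mem_univ _)
  · intro t h1 h2
    rcases eq_or_ne t k with rfl | h
    · simp [fwdState]
    · rw [fwdState, if_neg h, _root_.get, dif_pos (by omega)]
  · intro t h1 h2
    rcases eq_or_ne t k with rfl | h
    · simp [bwdState]
    · rw [bwdState, if_neg h, _root_.get, dif_pos (by omega)]
      congr 1
      dsimp only
      omega

/-- Gluing a maximizing forward tuple and a maximizing backward tuple at `a`. -/
theorem exists_jointW_eq [Fintype X] [Nonempty X] {T k : ℕ} (hk1 : 1 ≤ k) (hkT : k ≤ T)
    (ψ₁ : X → ℝ≥0) (ψ : ℕ → X → X → ℝ≥0) (a : X) :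
    ∃ q : Fin T → X, get q (k - 1) = a ∧
      jointW ψ₁ ψ T q = maxFwd ψ₁ ψ k a * maxBwd ψ k T a := by
  obtain ⟨p, -, hp⟩ := Finset.exists_mem_eq_sup' Finset.univ_nonempty
    fun p : Fin (k - 1) → X => ψ₁ (fwdState k a p 1) *
      ∏ t ∈ Finset.Icc 2 k, ψ t (fwdState k a p (t - 1)) (fwdState k a p t)
  obtain ⟨r, -, hr⟩ := Finset.exists_mem_eq_sup' Finset.univ_nonempty
    fun r : Fin (T - k) → X =>
      ∏ t ∈ Finset.Icc (k + 1) T, ψ t (bwdState k a r (t - 1)) (bwdState k a r t)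
  let q : Fin T → X := fun i =>
    if (i : ℕ) + 1 ≤ k then fwdState k a p (i + 1) else bwdState k a r (i + 1)
  have hf : ∀ t, 1 ≤ t → t ≤ k → fwdState k a p t = get q (t - 1) := by
    intro t h1 h2
    have h3 : t - 1 + 1 = t := by omega
    rw [_root_.get, dif_pos (by omega)]
    simp only [q, h3, if_pos h2]
  have hb : ∀ t, k ≤ t → t ≤ T → bwdState k a r t = get q (t - 1) := by
    intro t h1 h2
    rcases eq_or_ne t k with rfl | h
    · rw [← hf t hk1 le_rfl]
      simp [bwdState, fwdState]
    · have h3 : t - 1 + 1 = t := by omega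
      have h4 : ¬ t ≤ k := by omega
      rw [_root_.get, dif_pos (by omega)]
      simp only [q, h3, if_neg h4]
  refine ⟨q, ?_, ?_⟩
  · rw [← hf k hk1 le_rfl]
    simp [fwdState]
  · rw [jointW_eq_mul hk1 hkT ψ₁ ψ q a p r hf hb, maxFwd, maxBwd, hp, hr]

/-- If `qstar` is the unique maximizer of the joint potential product over all
full state sequences, then for every `1 ≤ k ≤ T` its `k`-th coordinate is the
unique maximizer over `a ∈ X` of `ψ̃^f_k(a) · ψ̃^b_k(a)`. -/
theorem unique_MAP_coordinatewise
    [Fintype X] [Nonempty X] (T : ℕ) (hT : 1 ≤ T)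
    (ψ₁ : X → ℝ≥0) (ψ : ℕ → X → X → ℝ≥0)
    (qstar : Fin T → X)
    (hq : ∀ q : Fin T → X, q ≠ qstar → jointW ψ₁ ψ T q < jointW ψ₁ ψ T qstar)
    (k : ℕ) (hk1 : 1 ≤ k) (hkT : k ≤ T) :
    ∀ a : X, a ≠ get qstar (k - 1) →
      maxFwd ψ₁ ψ k a * maxBwd ψ k T a
        < maxFwd ψ₁ ψ k (get qstar (k - 1)) * maxBwd ψ k T (get qstar (k - 1)) := by
  intro a ha
  obtain ⟨q, hqa, hqe⟩ := exists_jointW_eq hk1 hkT ψ₁ ψ a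
  rw [← hqe]
  refine (hq q ?_).trans_le (jointW_le hk1 hkT ψ₁ ψ qstar)
  rintro rfl
  exact ha hqa.symm
end

section
/- Viterbi backtracking correctness: define V_1(x) = ψ₁(x) and V_k(x) = max_{x' ∈ X} ψ_k(x', x) · V_{k-1}(x') for 2 ≤ k ≤ T. Suppose x*_T attains max_{x ∈ X} V_T(x), and for each k = T, T−1, …, 2, x*_{k-1} attains max_{x' ∈ X} ψ_k(x', x*_k) · V_{k-1}(x'). Then the sequence (x*_1, …, x*_T) attains the maximum over all (x_1, …, x_T) ∈ X^T of ψ₁(x_1) · ∏_{t=2}^{T} ψ_t(x_{t-1}, x_t). -/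
/-!
Every prefix `x_1, …, x_k` of a state sequence has potential product at most `V_k(x_k)`, because
the recursion for `V_k` maximizes over the last transition (`prefix_le_vitRec`). Along a
backtracked sequence each of these maxima is attained, so equality holds at every `k`
(`prefix_eq_vitRec`). Hence, for any competing sequence `x`, the product of `x` is at most
`V_T(x_T) ≤ max V_T = V_T(x*_T)`, which is the product of `x*`.
-/

open scoped NNReal BigOperators

variable {X : Type*}

/-- The Viterbi forward recursion:
`V_1(x) = ψ₁(x)` and `V_k(x) = max_{x'} ψ_k(x', x) V_{k-1}(x')` for `k ≥ 2`. -/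
noncomputable def vitRec [Fintype X] [Nonempty X] (ψ₁ : X → ℝ≥0)
    (ψ : ℕ → X → X → ℝ≥0) : ℕ → X → ℝ≥0
  | 0, x => ψ₁ x
  | 1, x => ψ₁ x
  | k + 2, x =>
      Finset.univ.sup' Finset.univ_nonempty fun x' : X =>
        ψ (k + 2) x' x * vitRec ψ₁ ψ (k + 1) x'

/-- `V_k` dominates the potential product of every prefix of length `k = m + 1`; the state sequence
is 0-based, so `s m` is the `k`-th state. -/
theorem prefix_le_vitRec [Fintype X] [Nonempty X] (ψ₁ : X → ℝ≥0) (ψ : ℕ → X → X → ℝ≥0)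
    (s : ℕ → X) (m : ℕ) :
    ψ₁ (s 0) * ∏ t ∈ Finset.Icc 2 (m + 1), ψ t (s (t - 2)) (s (t - 1))
      ≤ vitRec ψ₁ ψ (m + 1) (s m) := by
  induction m with
  | zero => simp [vitRec]
  | succ m ih =>
    rw [Finset.prod_Icc_succ_top (by omega), ← mul_assoc, mul_comm]
    calc _ ≤ ψ (m + 2) (s m) (s (m + 1)) * vitRec ψ₁ ψ (m + 1) (s m) :=
          mul_le_mul_of_nonneg_left ih zero_le
      _ ≤ vitRec ψ₁ ψ (m + 2) (s (m + 1)) :=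
          Finset.le_sup' (fun x' : X => ψ (m + 2) x' (s (m + 1)) * vitRec ψ₁ ψ (m + 1) x')
            (Finset.mem_univ (s m))

/-- The bound of `prefix_le_vitRec` is attained when every transition of the sequence up to time `T`
realizes the maximum in the recursion. -/
theorem prefix_eq_vitRec [Fintype X] [Nonempty X] (ψ₁ : X → ℝ≥0) (ψ : ℕ → X → X → ℝ≥0)
    (s : ℕ → X) (T : ℕ)
    (hs : ∀ k : ℕ, 2 ≤ k → k ≤ T →
      ψ k (s (k - 2)) (s (k - 1)) * vitRec ψ₁ ψ (k - 1) (s (k - 2))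
        = Finset.univ.sup' Finset.univ_nonempty
            (fun x' : X => ψ k x' (s (k - 1)) * vitRec ψ₁ ψ (k - 1) x'))
    (m : ℕ) (hm : m + 1 ≤ T) :
    ψ₁ (s 0) * ∏ t ∈ Finset.Icc 2 (m + 1), ψ t (s (t - 2)) (s (t - 1))
      = vitRec ψ₁ ψ (m + 1) (s m) := by
  induction m with
  | zero => simp [vitRec]
  | succ m ih =>
    rw [Finset.prod_Icc_succ_top (by omega), ← mul_assoc, ih (by omega), mul_comm]
    exact hs (m + 2) (by omega) hm

/-- Viterbi backtracking correctness: if `x*_T` attains `max_x V_T(x)` and, for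
each `k = T, …, 2`, `x*_{k-1}` attains `max_{x'} ψ_k(x', x*_k) V_{k-1}(x')`,
then the sequence `(x*_1, …, x*_T)` (here `x*_t = get xs (t-1)`) attains the
maximum of the joint potential product over all state sequences. -/
theorem viterbi_backtracking_correct [Fintype X] [Nonempty X]
    (T : ℕ) (hT : 1 ≤ T) (ψ₁ : X → ℝ≥0) (ψ : ℕ → X → X → ℝ≥0)
    (xs : Fin T → X)
    (hlast : vitRec ψ₁ ψ T (get xs (T - 1))
      = Finset.univ.sup' Finset.univ_nonempty (vitRec ψ₁ ψ T))
    (hbt : ∀ k : ℕ, 2 ≤ k → k ≤ T →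
      ψ k (get xs (k - 2)) (get xs (k - 1)) * vitRec ψ₁ ψ (k - 1) (get xs (k - 2))
        = Finset.univ.sup' Finset.univ_nonempty
            (fun x' : X => ψ k x' (get xs (k - 1)) * vitRec ψ₁ ψ (k - 1) x')) :
    jointW ψ₁ ψ T xs
      = Finset.univ.sup' Finset.univ_nonempty (jointW ψ₁ ψ T) := by
  obtain ⟨m, rfl⟩ : ∃ m, T = m + 1 := ⟨T - 1, by omega⟩
  refine le_antisymm (Finset.le_sup' _ (Finset.mem_univ xs)) (Finset.sup'_le _ _ fun q _ => ?_)
  calc jointW ψ₁ ψ (m + 1) q ≤ vitRec ψ₁ ψ (m + 1) (get q m) :=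
        prefix_le_vitRec ψ₁ ψ (get q) m
    _ ≤ Finset.univ.sup' Finset.univ_nonempty (vitRec ψ₁ ψ (m + 1)) :=
        Finset.le_sup' _ (Finset.mem_univ _)
    _ = vitRec ψ₁ ψ (m + 1) (get xs m) := hlast.symm
    _ = jointW ψ₁ ψ (m + 1) xs :=
        (prefix_eq_vitRec ψ₁ ψ (get xs) (m + 1) hbt m le_rfl).symm
end

section
/- Viterbi forward value correctness: define V_1(x) = ψ₁(x) and V_k(x) = max_{x' ∈ X} ψ_k(x', x) · V_{k-1}(x') for 2 ≤ k ≤ T. Then max_{x ∈ X} V_T(x) = max over all (x_1, …, x_T) ∈ X^T of ψ₁(x_1) · ∏_{t=2}^{T} ψ_t(x_{t-1}, x_t), i.e., the final value of the Viterbi forward pass equals the probability of the maximum-a-posteriori path. -/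
/-!
A path of length `k + 2` is a path of length `k + 1` with one more state appended, and its joint
potential is the old one times the last transition potential (`jointW_succ`). By induction
on the length, the joint potential of a path is at most the Viterbi value at its terminal state
(`jointW_le_vitRec`), because multiplying by a nonnegative number is monotone. In the other
direction, following a maximizing predecessor at each step gives, for every state `x`, a path ending
in `x` whose joint potential is exactly the Viterbi value at `x` (`exists_jointW_eq_vitRec`).
Maximizing over the terminal state gives both inequalities.
-/

open scoped NNReal BigOperators

variable {X : Type*}

/-- Appending the state `q (Fin.last (k + 1))` to a path multiplies its joint potential by the last
transition potential. -/
theorem jointW_succ [Nonempty X] (ψ₁ : X → ℝ≥0) (ψ : ℕ → X → X → ℝ≥0) (k : ℕ)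
    (q : Fin (k + 2) → X) :
    jointW ψ₁ ψ (k + 2) q
      = ψ (k + 2) (Fin.init q (Fin.last k)) (q (Fin.last (k + 1)))
        * jointW ψ₁ ψ (k + 1) (Fin.init q) := by
  have hget : ∀ t, t < k + 1 → get (Fin.init q) t = get q t := by
    intro t ht
    simp only [_root_.get, dif_pos ht, dif_pos (Nat.lt_succ_of_lt ht)]
    rfl
  have h1 : get q k = Fin.init q (Fin.last k) := by
    rw [← hget k (Nat.lt_succ_self k), _root_.get, dif_pos (Nat.lt_succ_self k)]
    rfl
  have h2 : get q (k + 1) = q (Fin.last (k + 1)) := by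
    rw [_root_.get, dif_pos (Nat.lt_succ_self (k + 1))]
    rfl
  have hprod : ∏ t ∈ Finset.Icc 2 (k + 1),
        ψ t (get (Fin.init q) (t - 2)) (get (Fin.init q) (t - 1))
      = ∏ t ∈ Finset.Icc 2 (k + 1), ψ t (get q (t - 2)) (get q (t - 1)) := by
    refine Finset.prod_congr rfl fun t ht => ?_
    rw [Finset.mem_Icc] at ht
    rw [hget _ (by omega), hget _ (by omega)]
  unfold jointW
  rw [hprod, hget 0 (Nat.succ_pos k), Finset.prod_Icc_succ_top (by omega : 2 ≤ k + 1 + 1),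
    show k + 1 + 1 - 2 = k by omega, show k + 1 + 1 - 1 = k + 1 by omega, h1, h2]
  ring

theorem jointW_one [Nonempty X] (ψ₁ : X → ℝ≥0) (ψ : ℕ → X → X → ℝ≥0) (q : Fin 1 → X) :
    jointW ψ₁ ψ 1 q = ψ₁ (q (Fin.last 0)) := by
  simp [jointW, _root_.get]

theorem jointW_le_vitRec [Fintype X] [Nonempty X] (ψ₁ : X → ℝ≥0) (ψ : ℕ → X → X → ℝ≥0)
    (k : ℕ) (q : Fin (k + 1) → X) :
    jointW ψ₁ ψ (k + 1) q ≤ vitRec ψ₁ ψ (k + 1) (q (Fin.last k)) := by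
  induction k with
  | zero => rw [jointW_one, vitRec]
  | succ k ih =>
    rw [jointW_succ, vitRec]
    exact (mul_le_mul_right (ih (Fin.init q)) _).trans
      (Finset.le_sup' (fun x' => ψ (k + 2) x' (q (Fin.last (k + 1))) * vitRec ψ₁ ψ (k + 1) x')
        (Finset.mem_univ (Fin.init q (Fin.last k))))

/-- Backtracking: every Viterbi value is the joint potential of some path ending in the given
state. -/
theorem exists_jointW_eq_vitRec [Fintype X] [Nonempty X] (ψ₁ : X → ℝ≥0)
    (ψ : ℕ → X → X → ℝ≥0) (k : ℕ) (x : X) :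
    ∃ q : Fin (k + 1) → X,
      q (Fin.last k) = x ∧ jointW ψ₁ ψ (k + 1) q = vitRec ψ₁ ψ (k + 1) x := by
  induction k generalizing x with
  | zero => exact ⟨fun _ => x, rfl, by rw [jointW_one, vitRec]⟩
  | succ k ih =>
    obtain ⟨x', -, hx'⟩ := Finset.exists_mem_eq_sup' Finset.univ_nonempty
      fun x' : X => ψ (k + 2) x' x * vitRec ψ₁ ψ (k + 1) x'
    obtain ⟨q, hq, hw⟩ := ih x'
    refine ⟨Fin.snoc q x, Fin.snoc_last (α := fun _ => X) x q, ?_⟩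
    rw [jointW_succ, vitRec, hx', Fin.init_snoc, Fin.snoc_last, hq, hw]

/-- Viterbi forward value correctness: the final value `max_x V_T(x)` of the
Viterbi forward pass equals the maximum of the joint potential product over
all state sequences, i.e. the probability of the MAP path. -/
theorem viterbi_value_correct [Fintype X] [Nonempty X]
    (T : ℕ) (hT : 1 ≤ T) (ψ₁ : X → ℝ≥0) (ψ : ℕ → X → X → ℝ≥0) :
    Finset.univ.sup' Finset.univ_nonempty (vitRec ψ₁ ψ T)
      = Finset.univ.sup' Finset.univ_nonempty (jointW ψ₁ ψ T) := by
  obtain ⟨k, rfl⟩ := Nat.exists_eq_add_of_le' hT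
  apply le_antisymm
  · refine Finset.sup'_le _ _ fun x _ => ?_
    obtain ⟨q, -, hw⟩ := exists_jointW_eq_vitRec ψ₁ ψ k x
    rw [← hw]
    exact Finset.le_sup' (jointW ψ₁ ψ (k + 1)) (Finset.mem_univ q)
  · refine Finset.sup'_le _ _ fun q _ => ?_
    exact (jointW_le_vitRec ψ₁ ψ k q).trans
      (Finset.le_sup' (vitRec ψ₁ ψ (k + 1)) (Finset.mem_univ _))
end
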